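/- There exists a universal constant C > 0 such that the following holds. Assume μ ≥ μ_h, 0 < ε ≤ 1/15, L ≥ C·μ²·s·(K+N)·(log L)², that the Local RIP holds, that the rank-one bound holds, and that |‖𝒜(P_T(Z))‖² − ‖P_T(Z)‖_F²| ≤ (1/10)‖Z‖_F² for every block-diagonal Z. Then for every (h,x) ∈ 𝒩_d ∩ 𝒩_μ ∩ 𝒩_ε: Re(⟨∇F_h(h,x), Δh⟩ + ⟨∇F_x(h,x), Δx⟩) ≥ δ²d_0²/8 − 2√s·δ·d_0·‖𝒜*(e)‖. -/

import Mathlib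

noncomputable section
open Finset ComplexConjugate

namespace RGD

/-- Squared Euclidean norm of a complex vector. -/
def vnormSq {n : ℕ} (v : Fin n → ℂ) : ℝ := ∑ j, ‖v j‖ ^ 2

/-- Euclidean norm of a complex vector. -/
def vnorm {n : ℕ} (v : Fin n → ℂ) : ℝ := Real.sqrt (vnormSq v)

/-- Inner product, conjugate-linear in the first argument. -/
def vinner {n : ℕ} (u v : Fin n → ℂ) : ℂ := ∑ j, conj (u j) * v j

/-- Squared Frobenius norm of a matrix. -/
def frobSq {K N : ℕ} (Z : Matrix (Fin K) (Fin N) ℂ) : ℝ := ∑ k, ∑ j, ‖Z k j‖ ^ 2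

/-- Frobenius norm of a matrix. -/
def frob {K N : ℕ} (Z : Matrix (Fin K) (Fin N) ℂ) : ℝ := Real.sqrt (frobSq Z)

/-- Frobenius inner product `⟨U,V⟩ = Tr(U*V)`, conjugate-linear in the first argument. -/
def finner {K N : ℕ} (U V : Matrix (Fin K) (Fin N) ℂ) : ℂ := ∑ k, ∑ j, conj (U k j) * V k j

/-- Spectral (operator) norm of a matrix: sup of `‖Zv‖` over the closed unit ball. -/
def opNorm {K N : ℕ} (Z : Matrix (Fin K) (Fin N) ℂ) : ℝ :=
  sSup {r : ℝ | ∃ v : Fin N → ℂ, vnorm v ≤ 1 ∧ r = vnorm (Z.mulVec v)}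

/-- Squared Frobenius norm of a block-diagonal matrix, given by its diagonal blocks. -/
def famFrobSq {K N s : ℕ} (Z : Fin s → Matrix (Fin K) (Fin N) ℂ) : ℝ := ∑ i, frobSq (Z i)

/-- Frobenius norm of a block-diagonal matrix, given by its diagonal blocks. -/
def famFrob {K N s : ℕ} (Z : Fin s → Matrix (Fin K) (Fin N) ℂ) : ℝ := Real.sqrt (famFrobSq Z)

/-- The rank-one matrix `u v*`. -/
def rankOne {K N : ℕ} (u : Fin K → ℂ) (v : Fin N → ℂ) : Matrix (Fin K) (Fin N) ℂ :=
  Matrix.of fun k j => u k * conj (v j)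

/-- `ℋ(h,x)`: block-diagonal matrix with `i`-th block `hᵢ xᵢ*`. -/
def Hmap {K N s : ℕ} (h : Fin s → Fin K → ℂ) (x : Fin s → Fin N → ℂ) :
    Fin s → Matrix (Fin K) (Fin N) ℂ := fun i => rankOne (h i) (x i)

/-- `𝒜ᵢ(Z) = (bₗ* Z aₗ)ₗ`. -/
def calAi {K N L : ℕ} (b : Fin L → Fin K → ℂ) (a : Fin L → Fin N → ℂ)
    (Z : Matrix (Fin K) (Fin N) ℂ) : Fin L → ℂ :=
  fun l => vinner (b l) (Z.mulVec (a l))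

/-- `𝒜(Z) = Σᵢ 𝒜ᵢ(Zᵢ)` on block-diagonal matrices. -/
def calA {K N L s : ℕ} (b : Fin L → Fin K → ℂ) (a : Fin s → Fin L → Fin N → ℂ)
    (Z : Fin s → Matrix (Fin K) (Fin N) ℂ) : Fin L → ℂ :=
  fun l => ∑ i, calAi b (a i) (Z i) l

/-- `𝒜ᵢ*(z) = Σₗ zₗ bₗ aₗ*`. -/
def calAdj {K N L : ℕ} (b : Fin L → Fin K → ℂ) (a : Fin L → Fin N → ℂ)
    (z : Fin L → ℂ) : Matrix (Fin K) (Fin N) ℂ :=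
  Matrix.of fun k j => ∑ l, z l * b l k * conj (a l j)

/-- `‖𝒜*(e)‖ = maxᵢ ‖𝒜ᵢ*(e)‖` (operator norms). -/
def AadjNorm {K N L s : ℕ} (b : Fin L → Fin K → ℂ) (a : Fin s → Fin L → Fin N → ℂ)
    (e : Fin L → ℂ) : ℝ :=
  ⨆ i : Fin s, opNorm (calAdj b (a i) e)

/-- `B*B = I_K`, expressed in terms of the columns `bₗ` of `B*`. -/
def BtBeqI {K L : ℕ} (b : Fin L → Fin K → ℂ) : Prop :=
  ∀ k k' : Fin K, (∑ l, b l k * conj (b l k')) = if k = k' then (1 : ℂ) else 0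

/-- `μ ≥ μ_h`, i.e. `√L ‖B h_{i0}‖_∞ ≤ μ ‖h_{i0}‖` for all `i`. -/
def muhLe {K L s : ℕ} (b : Fin L → Fin K → ℂ) (h0 : Fin s → Fin K → ℂ) (μ : ℝ) : Prop :=
  ∀ i l, Real.sqrt L * ‖vinner (b l) (h0 i)‖ ≤ μ * vnorm (h0 i)

/-- `d₀ = √(Σᵢ d_{i0}²)`. -/
def dtot {s : ℕ} (d0 : Fin s → ℝ) : ℝ := Real.sqrt (∑ i, d0 i ^ 2)

/-- Condition number `κ = (maxᵢ d_{i0}) / (minᵢ d_{i0})`. -/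
def kappa {s : ℕ} (d0 : Fin s → ℝ) : ℝ := (⨆ i, d0 i) / (⨅ i, d0 i)

/-- The observation `y = 𝒜(ℋ(h₀,x₀)) + e`. -/
def yvec {K N L s : ℕ} (b : Fin L → Fin K → ℂ) (a : Fin s → Fin L → Fin N → ℂ)
    (h0 : Fin s → Fin K → ℂ) (x0 : Fin s → Fin N → ℂ) (e : Fin L → ℂ) : Fin L → ℂ :=
  fun l => calA b a (Hmap h0 x0) l + e l

/-- `F(h,x) = ‖𝒜(ℋ(h,x)) − y‖²`. -/
def Fobj {K N L s : ℕ} (b : Fin L → Fin K → ℂ) (a : Fin s → Fin L → Fin N → ℂ)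
    (h0 : Fin s → Fin K → ℂ) (x0 : Fin s → Fin N → ℂ) (e : Fin L → ℂ)
    (h : Fin s → Fin K → ℂ) (x : Fin s → Fin N → ℂ) : ℝ :=
  vnormSq (fun l => calA b a (Hmap h x) l - yvec b a h0 x0 e l)

def G0 (z : ℝ) : ℝ := max (z - 1) 0 ^ 2

def G0' (z : ℝ) : ℝ := 2 * max (z - 1) 0

/-- The `i`-th regularizer `Gᵢ(hᵢ,xᵢ)` (including the factor `ρ`). -/
def Gi {K N L : ℕ} (b : Fin L → Fin K → ℂ) (ρ μ di : ℝ)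
    (hi : Fin K → ℂ) (xi : Fin N → ℂ) : ℝ :=
  ρ * (G0 (vnormSq hi / (2 * di)) + G0 (vnormSq xi / (2 * di))
    + ∑ l, G0 ((L : ℝ) * ‖vinner (b l) hi‖ ^ 2 / (8 * di * μ ^ 2)))

/-- The regularizer `G(h,x) = Σᵢ Gᵢ(hᵢ,xᵢ)`. -/
def Greg {K N L s : ℕ} (b : Fin L → Fin K → ℂ) (ρ μ : ℝ) (dd : Fin s → ℝ)
    (h : Fin s → Fin K → ℂ) (x : Fin s → Fin N → ℂ) : ℝ :=
  ∑ i, Gi b ρ μ (dd i) (h i) (x i)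

/-- `F̃ = F + G`. -/
def Ftil {K N L s : ℕ} (b : Fin L → Fin K → ℂ) (a : Fin s → Fin L → Fin N → ℂ)
    (h0 : Fin s → Fin K → ℂ) (x0 : Fin s → Fin N → ℂ) (e : Fin L → ℂ)
    (ρ μ : ℝ) (dd : Fin s → ℝ)
    (h : Fin s → Fin K → ℂ) (x : Fin s → Fin N → ℂ) : ℝ :=
  Fobj b a h0 x0 e h x + Greg b ρ μ dd h x

/-- The residual `𝒜(ℋ(h,x)) − y`. -/
def residual {K N L s : ℕ} (b : Fin L → Fin K → ℂ) (a : Fin s → Fin L → Fin N → ℂ)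
    (h0 : Fin s → Fin K → ℂ) (x0 : Fin s → Fin N → ℂ) (e : Fin L → ℂ)
    (h : Fin s → Fin K → ℂ) (x : Fin s → Fin N → ℂ) : Fin L → ℂ :=
  fun l => calA b a (Hmap h x) l - yvec b a h0 x0 e l

/-- Wirtinger gradient `∇F_{hᵢ} = 𝒜ᵢ*(𝒜(ℋ(h,x)) − y) xᵢ`. -/
def gradFh {K N L s : ℕ} (b : Fin L → Fin K → ℂ) (a : Fin s → Fin L → Fin N → ℂ)
    (h0 : Fin s → Fin K → ℂ) (x0 : Fin s → Fin N → ℂ) (e : Fin L → ℂ)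
    (h : Fin s → Fin K → ℂ) (x : Fin s → Fin N → ℂ) (i : Fin s) : Fin K → ℂ :=
  (calAdj b (a i) (residual b a h0 x0 e h x)).mulVec (x i)

/-- Wirtinger gradient `∇F_{xᵢ} = (𝒜ᵢ*(𝒜(ℋ(h,x)) − y))* hᵢ`. -/
def gradFx {K N L s : ℕ} (b : Fin L → Fin K → ℂ) (a : Fin s → Fin L → Fin N → ℂ)
    (h0 : Fin s → Fin K → ℂ) (x0 : Fin s → Fin N → ℂ) (e : Fin L → ℂ)
    (h : Fin s → Fin K → ℂ) (x : Fin s → Fin N → ℂ) (i : Fin s) : Fin N → ℂ :=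
  (calAdj b (a i) (residual b a h0 x0 e h x)).conjTranspose.mulVec (h i)

/-- Wirtinger gradient `∇G_{hᵢ}`. -/
def gradGh {K L s : ℕ} (b : Fin L → Fin K → ℂ) (ρ μ : ℝ) (dd : Fin s → ℝ)
    (h : Fin s → Fin K → ℂ) (i : Fin s) : Fin K → ℂ :=
  fun k => ((ρ / (2 * dd i) : ℝ) : ℂ) *
    (((G0' (vnormSq (h i) / (2 * dd i)) : ℝ) : ℂ) * h i k
      + (((L : ℝ) / (4 * μ ^ 2) : ℝ) : ℂ) *
        ∑ l, ((G0' ((L : ℝ) * ‖vinner (b l) (h i)‖ ^ 2 / (8 * dd i * μ ^ 2)) : ℝ) : ℂ)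
          * (vinner (b l) (h i) * b l k))

/-- Wirtinger gradient `∇G_{xᵢ}`. -/
def gradGx {N s : ℕ} (ρ : ℝ) (dd : Fin s → ℝ)
    (x : Fin s → Fin N → ℂ) (i : Fin s) : Fin N → ℂ :=
  fun j => ((ρ / (2 * dd i) : ℝ) : ℂ) * (((G0' (vnormSq (x i) / (2 * dd i)) : ℝ) : ℂ) * x i j)

/-- `∇F̃_{hᵢ} = ∇F_{hᵢ} + ∇G_{hᵢ}`. -/
def gradH {K N L s : ℕ} (b : Fin L → Fin K → ℂ) (a : Fin s → Fin L → Fin N → ℂ)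
    (h0 : Fin s → Fin K → ℂ) (x0 : Fin s → Fin N → ℂ) (e : Fin L → ℂ)
    (ρ μ : ℝ) (dd : Fin s → ℝ)
    (h : Fin s → Fin K → ℂ) (x : Fin s → Fin N → ℂ) (i : Fin s) : Fin K → ℂ :=
  fun k => gradFh b a h0 x0 e h x i k + gradGh b ρ μ dd h i k

/-- `∇F̃_{xᵢ} = ∇F_{xᵢ} + ∇G_{xᵢ}`. -/
def gradX {K N L s : ℕ} (b : Fin L → Fin K → ℂ) (a : Fin s → Fin L → Fin N → ℂ)
    (h0 : Fin s → Fin K → ℂ) (x0 : Fin s → Fin N → ℂ) (e : Fin L → ℂ)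
    (ρ μ : ℝ) (dd : Fin s → ℝ)
    (h : Fin s → Fin K → ℂ) (x : Fin s → Fin N → ℂ) (i : Fin s) : Fin N → ℂ :=
  fun j => gradFx b a h0 x0 e h x i j + gradGx ρ dd x i j

/-- `‖∇F̃(h,x)‖²` (squared norm of the stacked Wirtinger gradient). -/
def gradNormSq {K N L s : ℕ} (b : Fin L → Fin K → ℂ) (a : Fin s → Fin L → Fin N → ℂ)
    (h0 : Fin s → Fin K → ℂ) (x0 : Fin s → Fin N → ℂ) (e : Fin L → ℂ)
    (ρ μ : ℝ) (dd : Fin s → ℝ)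
    (h : Fin s → Fin K → ℂ) (x : Fin s → Fin N → ℂ) : ℝ :=
  ∑ i, vnormSq (gradH b a h0 x0 e ρ μ dd h x i) + ∑ i, vnormSq (gradX b a h0 x0 e ρ μ dd h x i)

/-- `‖∇F̃(h',x') − ∇F̃(h,x)‖²`. -/
def gradDiffNormSq {K N L s : ℕ} (b : Fin L → Fin K → ℂ) (a : Fin s → Fin L → Fin N → ℂ)
    (h0 : Fin s → Fin K → ℂ) (x0 : Fin s → Fin N → ℂ) (e : Fin L → ℂ)
    (ρ μ : ℝ) (dd : Fin s → ℝ)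
    (h : Fin s → Fin K → ℂ) (x : Fin s → Fin N → ℂ)
    (h' : Fin s → Fin K → ℂ) (x' : Fin s → Fin N → ℂ) : ℝ :=
  ∑ i, vnormSq (fun k => gradH b a h0 x0 e ρ μ dd h' x' i k - gradH b a h0 x0 e ρ μ dd h x i k)
  + ∑ i, vnormSq (fun j => gradX b a h0 x0 e ρ μ dd h' x' i j - gradX b a h0 x0 e ρ μ dd h x i j)

/-- Membership in `𝒩_d`. -/
def inNd {K N s : ℕ} (d0 : Fin s → ℝ)
    (h : Fin s → Fin K → ℂ) (x : Fin s → Fin N → ℂ) : Prop :=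
  ∀ i, vnorm (h i) ≤ 2 * Real.sqrt (d0 i) ∧ vnorm (x i) ≤ 2 * Real.sqrt (d0 i)

/-- Membership in `𝒩_μ`. -/
def inNmu {K L s : ℕ} (b : Fin L → Fin K → ℂ) (d0 : Fin s → ℝ) (μ : ℝ)
    (h : Fin s → Fin K → ℂ) : Prop :=
  ∀ i, ∀ l, Real.sqrt L * ‖vinner (b l) (h i)‖ ≤ 4 * Real.sqrt (d0 i) * μ

/-- `δᵢ(hᵢ,xᵢ) = ‖hᵢxᵢ* − h_{i0}x_{i0}*‖_F / d_{i0}`. -/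
def deltaI {K N : ℕ} (h0i : Fin K → ℂ) (x0i : Fin N → ℂ) (d0i : ℝ)
    (hi : Fin K → ℂ) (xi : Fin N → ℂ) : ℝ :=
  frob (rankOne hi xi - rankOne h0i x0i) / d0i

/-- Membership in `𝒩_ε`. -/
def inNeps {K N s : ℕ} (h0 : Fin s → Fin K → ℂ) (x0 : Fin s → Fin N → ℂ)
    (d0 : Fin s → ℝ) (ε : ℝ)
    (h : Fin s → Fin K → ℂ) (x : Fin s → Fin N → ℂ) : Prop :=
  ∀ i, deltaI (h0 i) (x0 i) (d0 i) (h i) (x i) ≤ ε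

/-- The global relative error `δ(h,x) = ‖ℋ(h,x) − X₀‖_F / d₀`. -/
def deltaTot {K N s : ℕ} (h0 : Fin s → Fin K → ℂ) (x0 : Fin s → Fin N → ℂ)
    (d0 : Fin s → ℝ)
    (h : Fin s → Fin K → ℂ) (x : Fin s → Fin N → ℂ) : ℝ :=
  famFrob (fun i => Hmap h x i - Hmap h0 x0 i) / dtot d0

/-- Membership in `𝒩_F̃`. -/
def inNF {K N L s : ℕ} (b : Fin L → Fin K → ℂ) (a : Fin s → Fin L → Fin N → ℂ)
    (h0 : Fin s → Fin K → ℂ) (x0 : Fin s → Fin N → ℂ) (e : Fin L → ℂ)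
    (d0 : Fin s → ℝ) (ρ μ : ℝ) (dd : Fin s → ℝ) (ε : ℝ)
    (h : Fin s → Fin K → ℂ) (x : Fin s → Fin N → ℂ) : Prop :=
  Ftil b a h0 x0 e ρ μ dd h x ≤ ε ^ 2 * dtot d0 ^ 2 / (3 * (s : ℝ) * kappa d0 ^ 2) + vnormSq e

/-- The Local Restricted Isometry Property on `𝒩_d ∩ 𝒩_μ ∩ 𝒩_ε`. -/
def LocalRIP {K N L s : ℕ} (b : Fin L → Fin K → ℂ) (a : Fin s → Fin L → Fin N → ℂ)
    (h0 : Fin s → Fin K → ℂ) (x0 : Fin s → Fin N → ℂ)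
    (d0 : Fin s → ℝ) (μ ε : ℝ) : Prop :=
  ∀ (h : Fin s → Fin K → ℂ) (x : Fin s → Fin N → ℂ),
    inNd d0 h x → inNmu b d0 μ h → inNeps h0 x0 d0 ε h x →
      (2 / 3) * famFrobSq (fun i => Hmap h x i - Hmap h0 x0 i)
          ≤ vnormSq (calA b a fun i => Hmap h x i - Hmap h0 x0 i)
      ∧ vnormSq (calA b a fun i => Hmap h x i - Hmap h0 x0 i)
          ≤ (3 / 2) * famFrobSq (fun i => Hmap h x i - Hmap h0 x0 i)

/-- `α_{i1} = ⟨h_{i0}, hᵢ⟩ / d_{i0}`. -/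
def alpha1 {K s : ℕ} (h0 : Fin s → Fin K → ℂ) (d0 : Fin s → ℝ)
    (h : Fin s → Fin K → ℂ) (i : Fin s) : ℂ :=
  vinner (h0 i) (h i) / ((d0 i : ℝ) : ℂ)

/-- `α_{i2} = ⟨x_{i0}, xᵢ⟩ / d_{i0}`. -/
def alpha2 {N s : ℕ} (x0 : Fin s → Fin N → ℂ) (d0 : Fin s → ℝ)
    (x : Fin s → Fin N → ℂ) (i : Fin s) : ℂ :=
  vinner (x0 i) (x i) / ((d0 i : ℝ) : ℂ)

/-- `δ₀ = δ/10`. -/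
def delta0 {K N s : ℕ} (h0 : Fin s → Fin K → ℂ) (x0 : Fin s → Fin N → ℂ)
    (d0 : Fin s → ℝ) (h : Fin s → Fin K → ℂ) (x : Fin s → Fin N → ℂ) : ℝ :=
  deltaTot h0 x0 d0 h x / 10

/-- `αᵢ = (1−δ₀)α_{i1}` if `‖hᵢ‖ ≥ ‖xᵢ‖`, else `1/((1−δ₀) conj(α_{i2}))`. -/
def alphaC {K N s : ℕ} (h0 : Fin s → Fin K → ℂ) (x0 : Fin s → Fin N → ℂ)
    (d0 : Fin s → ℝ) (h : Fin s → Fin K → ℂ) (x : Fin s → Fin N → ℂ) (i : Fin s) : ℂ :=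
  if vnorm (x i) ≤ vnorm (h i)
  then ((1 - delta0 h0 x0 d0 h x : ℝ) : ℂ) * alpha1 h0 d0 h i
  else 1 / (((1 - delta0 h0 x0 d0 h x : ℝ) : ℂ) * conj (alpha2 x0 d0 x i))

/-- `Δhᵢ = hᵢ − αᵢ h_{i0}`. -/
def dh {K N s : ℕ} (h0 : Fin s → Fin K → ℂ) (x0 : Fin s → Fin N → ℂ)
    (d0 : Fin s → ℝ) (h : Fin s → Fin K → ℂ) (x : Fin s → Fin N → ℂ) (i : Fin s) :
    Fin K → ℂ :=
  fun k => h i k - alphaC h0 x0 d0 h x i * h0 i k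

/-- `Δxᵢ = xᵢ − conj(αᵢ)⁻¹ x_{i0}`. -/
def dx {K N s : ℕ} (h0 : Fin s → Fin K → ℂ) (x0 : Fin s → Fin N → ℂ)
    (d0 : Fin s → ℝ) (h : Fin s → Fin K → ℂ) (x : Fin s → Fin N → ℂ) (i : Fin s) :
    Fin N → ℂ :=
  fun j => x i j - (conj (alphaC h0 x0 d0 h x i))⁻¹ * x0 i j

/-- `σ²_max(h,x) = maxₗ Σᵢ |bₗ*hᵢ|² ‖xᵢ‖²`. -/
def sigmaMaxSq {K N L s : ℕ} (b : Fin L → Fin K → ℂ)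
    (h : Fin s → Fin K → ℂ) (x : Fin s → Fin N → ℂ) : ℝ :=
  ⨆ l : Fin L, ∑ i, ‖vinner (b l) (h i)‖ ^ 2 * vnormSq (x i)

/-- The rank-one bound (Lemma: `𝒜` on block-diagonal matrices with rank-1 blocks). -/
def RankOneBound {K N L s : ℕ} (b : Fin L → Fin K → ℂ)
    (a : Fin s → Fin L → Fin N → ℂ) : Prop :=
  ∀ (h : Fin s → Fin K → ℂ) (x : Fin s → Fin N → ℂ),
    vnormSq (calA b a (Hmap h x)) ≤
      4 / 3 * famFrobSq (Hmap h x)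
      + 2 * Real.sqrt (2 * (s : ℝ) * famFrobSq (Hmap h x) * sigmaMaxSq b h x
          * ((K : ℝ) + N) * Real.log L)
      + 8 * (s : ℝ) * sigmaMaxSq b h x * ((K : ℝ) + N) * Real.log L

/-- The subspace `Tᵢ = {h_{i0} v* + u x_{i0}*}`. -/
def Tspace {K N : ℕ} (h0i : Fin K → ℂ) (x0i : Fin N → ℂ) :
    Set (Matrix (Fin K) (Fin N) ℂ) :=
  {Z | ∃ (u : Fin K → ℂ) (v : Fin N → ℂ), Z = rankOne h0i v + rankOne u x0i}

/-- `P` is the orthogonal projection onto `Tᵢ` w.r.t. the Frobenius inner product. -/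
def IsFrobProj {K N : ℕ} (h0i : Fin K → ℂ) (x0i : Fin N → ℂ)
    (P : Matrix (Fin K) (Fin N) ℂ → Matrix (Fin K) (Fin N) ℂ) : Prop :=
  ∀ Z, P Z ∈ Tspace h0i x0i ∧ ∀ W ∈ Tspace h0i x0i, finner W (Z - P Z) = 0

/-- Operator norm of `𝒜ᵢ` from `(ℂ^{K×N}, ‖·‖_F)` to `(ℂ^L, ‖·‖)`. -/
def calAiOpNorm {K N L : ℕ} (b : Fin L → Fin K → ℂ) (a : Fin L → Fin N → ℂ) : ℝ :=
  sSup {r : ℝ | ∃ Z : Matrix (Fin K) (Fin N) ℂ, frob Z ≤ 1 ∧ r = vnorm (calAi b a Z)}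

/-- Operator norm of `𝒜` from block-diagonal matrices with `‖·‖_F` to `ℂ^L`. -/
def calAOpNorm {K N L s : ℕ} (b : Fin L → Fin K → ℂ)
    (a : Fin s → Fin L → Fin N → ℂ) : ℝ :=
  sSup {r : ℝ | ∃ Z : Fin s → Matrix (Fin K) (Fin N) ℂ, famFrob Z ≤ 1 ∧ r = vnorm (calA b a Z)}

/-- Norm of a stacked vector in `ℂ^{ns}`. -/
def stackNorm {n s : ℕ} (u : Fin s → Fin n → ℂ) : ℝ := Real.sqrt (∑ i, vnormSq (u i))

/-- Norm of a point `z = (h,x) ∈ ℂ^{s(K+N)}`. -/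
def pairNorm {K N s : ℕ} (u : Fin s → Fin K → ℂ) (v : Fin s → Fin N → ℂ) : ℝ :=
  Real.sqrt (∑ i, vnormSq (u i) + ∑ i, vnormSq (v i))

/-- `z + t • w` componentwise, `t` real. -/
def shiftV {n s : ℕ} (u w : Fin s → Fin n → ℂ) (t : ℝ) : Fin s → Fin n → ℂ :=
  fun i k => u i k + (t : ℂ) * w i k

/-- `σ_max(h) = maxₗ √(Σᵢ |bₗ*hᵢ|²)` (unit `xᵢ`'s). -/
def sigmaMaxU {K L s : ℕ} (b : Fin L → Fin K → ℂ) (h : Fin s → Fin K → ℂ) : ℝ :=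
  ⨆ l, Real.sqrt (∑ i, ‖vinner (b l) (h i)‖ ^ 2)

/-! Replacing `(h₀ᵢ, x₀ᵢ)` by `(αᵢ • h₀ᵢ, (conj αᵢ)⁻¹ • x₀ᵢ)` does not change `X₀`, so the
differential of `ℋ` at `(h, x)` in the direction `(Δh, Δx)` is `(ℋ(h, x) - X₀) + ℋ(Δh, Δx)`, and the
real part of the pairing with the gradient is that of
`⟨𝒜((ℋ(h, x) - X₀) + ℋ(Δh, Δx)), 𝒜(ℋ(h, x) - X₀) - e⟩`.

Without noise, the lower RIP bound makes the term `‖𝒜(ℋ(h, x) - X₀)‖²` dominate: the blocks of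
`ℋ(Δh, Δx)` have norm at most `(δᵢ + δ₀) d_{i0} / 5`, and `Δh` inherits the incoherence of `h` and
`h₀`, so by the rank-one bound `‖𝒜(ℋ(Δh, Δx))‖²` is at most `3/8` of `‖ℋ(h, x) - X₀‖_F²`.
The noise contributes blockwise pairings of `𝒜ᵢ*(e)` with matrices of rank at most two and one;
these are bounded by its operator norm, and Cauchy–Schwarz over the blocks produces the factor
`√s`. -/

section Alignment

variable {𝕜 E F : Type*} [RCLike 𝕜] [SeminormedAddCommGroup E] [NormedSpace 𝕜 E]
  [SeminormedAddCommGroup F] [NormedSpace 𝕜 F]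

/-- A pair `(h, x)` with `‖x‖ ≤ ‖h‖` is close, up to the scaling ambiguity
`(c • h₀, (conj c)⁻¹ • x₀)`, to a reference pair of common norm `r`. The number `D` is the relative
error; the two errors are measured as they appear in the Frobenius distance of `h x*` and
`h₀ x₀*`. -/
structure IsAlignment (r D : ℝ) (h h₀ : E) (x x₀ : F) (c : 𝕜) : Prop where
  radius_pos : 0 < r
  error_le : D ≤ 1 / 15
  norm_left₀ : ‖h₀‖ = r
  norm_right₀ : ‖x₀‖ = r
  norm_right_le : ‖x‖ ≤ ‖h‖
  norm_left_le : ‖h‖ ≤ 2 * r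
  norm_coeff_mul_le : ‖c‖ * r ≤ ‖h‖
  left_error_le : ‖h - c • h₀‖ * ‖x‖ ≤ D * r ^ 2
  right_error_le : ‖conj c • x - x₀‖ ≤ D * r

namespace IsAlignment

variable {r D t : ℝ} {h h₀ : E} {x x₀ : F} {c : 𝕜}

lemma error_nonneg (H : IsAlignment r D h h₀ x x₀ c) : 0 ≤ D :=
  nonneg_of_mul_nonneg_left ((norm_nonneg _).trans H.right_error_le) H.radius_pos

lemma norm_coeff_le (H : IsAlignment r D h h₀ x x₀ c) : ‖c‖ ≤ 2 :=
  le_of_mul_le_mul_right (H.norm_coeff_mul_le.trans H.norm_left_le) H.radius_pos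

lemma norm_coeff_mul_norm_right_le (H : IsAlignment r D h h₀ x x₀ c) :
    ‖c‖ * ‖x‖ ≤ (1 + D) * r := by
  have := norm_le_norm_add_norm_sub' (conj c • x) x₀
  rw [norm_smul, RCLike.norm_conj, H.norm_right₀] at this
  linarith [H.right_error_le]

lemma le_norm_coeff_mul_norm_right (H : IsAlignment r D h h₀ x x₀ c) :
    (1 - D) * r ≤ ‖c‖ * ‖x‖ := by
  have := norm_le_norm_add_norm_sub (conj c • x) x₀
  rw [norm_smul, RCLike.norm_conj, H.norm_right₀] at this
  linarith [H.right_error_le]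

lemma le_norm_right (H : IsAlignment r D h h₀ x x₀ c) : 7 / 15 * r ≤ ‖x‖ := by
  have hD := mul_le_mul_of_nonneg_right H.error_le H.radius_pos.le
  have hc := mul_le_mul_of_nonneg_right H.norm_coeff_le (norm_nonneg x)
  linarith [H.le_norm_coeff_mul_norm_right]

lemma norm_left_sub_le (H : IsAlignment r D h h₀ x x₀ c) :
    ‖h - c • h₀‖ ≤ 15 / 7 * D * r := by
  have hx := mul_le_mul_of_nonneg_left H.le_norm_right (norm_nonneg (h - c • h₀))
  refine le_of_mul_le_mul_right (a := 7 / 15 * r) ?_ (by linarith [H.radius_pos])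
  linarith [H.left_error_le]

lemma le_norm_coeff (H : IsAlignment r D h h₀ x x₀ c) : 7 / 8 ≤ ‖c‖ := by
  have hr := H.radius_pos
  have hD := mul_le_mul_of_nonneg_right H.error_le hr.le
  by_contra! hlt
  have hh : ‖h‖ ≤ ‖c‖ * r + r / 7 := by
    have := norm_le_norm_add_norm_sub' h (c • h₀)
    rw [norm_smul, H.norm_left₀] at this
    linarith [H.norm_left_sub_le]
  have hcx : ‖c‖ * ‖x‖ ≤ 7 / 8 * (7 / 8 * r + r / 7) := by
    gcongr
    exact H.norm_right_le.trans (hh.trans (by gcongr))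
  linarith [H.le_norm_coeff_mul_norm_right]

lemma norm_shrunk_coeff (t_le : t ≤ 1 / 150) : ‖((1 - t : ℝ) : 𝕜) * c‖ = (1 - t) * ‖c‖ := by
  rw [norm_mul, RCLike.norm_of_nonneg (by linarith)]

lemma norm_shrunk_coeff_le (H : IsAlignment r D h h₀ x x₀ c) (t_nonneg : 0 ≤ t)
    (t_le : t ≤ 1 / 150) : ‖((1 - t : ℝ) : 𝕜) * c‖ ≤ 2 := by
  rw [norm_shrunk_coeff t_le]
  linarith [H.norm_coeff_le, mul_nonneg t_nonneg (norm_nonneg c)]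

lemma le_norm_shrunk_coeff (H : IsAlignment r D h h₀ x x₀ c) (t_le : t ≤ 1 / 150) :
    6 / 7 ≤ ‖((1 - t : ℝ) : 𝕜) * c‖ := by
  rw [norm_shrunk_coeff t_le]
  calc (6 / 7 : ℝ) ≤ 149 / 150 * (7 / 8) := by norm_num
    _ ≤ (1 - t) * ‖c‖ :=
      mul_le_mul (by linarith) H.le_norm_coeff (by norm_num) (by linarith)

lemma norm_left_sub_shrunk_le (H : IsAlignment r D h h₀ x x₀ c) (t_nonneg : 0 ≤ t) :
    ‖h - (((1 - t : ℝ) : 𝕜) * c) • h₀‖ ≤ 15 / 7 * (D + t) * r := by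
  have hsplit : h - (((1 - t : ℝ) : 𝕜) * c) • h₀ = (h - c • h₀) + ((t : 𝕜) * c) • h₀ := by
    push_cast
    module
  have hshift : ‖((t : 𝕜) * c) • h₀‖ ≤ t * 2 * r := by
    rw [norm_smul, norm_mul, H.norm_left₀, RCLike.norm_of_nonneg t_nonneg]
    have := H.radius_pos.le
    gcongr
    exact H.norm_coeff_le
  rw [hsplit]
  linarith [norm_add_le (h - c • h₀) (((t : 𝕜) * c) • h₀), H.norm_left_sub_le,
    mul_nonneg t_nonneg H.radius_pos.le]

lemma norm_right_sub_shrunk_le (H : IsAlignment r D h h₀ x x₀ c) (t_nonneg : 0 ≤ t)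
    (t_le : t ≤ 1 / 150) :
    ‖x - (conj (((1 - t : ℝ) : 𝕜) * c))⁻¹ • x₀‖ ≤ 5 / 4 * (D + t) * r := by
  have hβ := H.le_norm_shrunk_coeff t_le
  set β : 𝕜 := ((1 - t : ℝ) : 𝕜) * c with hβ_def
  have hβ₀ : conj β ≠ 0 := by
    rw [← norm_pos_iff, RCLike.norm_conj]
    linarith
  have hsplit : conj β • (x - (conj β)⁻¹ • x₀)
      = (conj c • x - x₀) - ((t : 𝕜) * conj c) • x := by
    rw [smul_sub, smul_inv_smul₀ hβ₀, hβ_def, map_mul, RCLike.conj_ofReal]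
    push_cast
    module
  have hshift : ‖((t : 𝕜) * conj c) • x‖ ≤ t * (16 / 15 * r) := by
    rw [norm_smul, norm_mul, RCLike.norm_conj, RCLike.norm_of_nonneg t_nonneg, mul_assoc]
    refine mul_le_mul_of_nonneg_left ?_ t_nonneg
    linarith [H.norm_coeff_mul_norm_right_le,
      mul_le_mul_of_nonneg_right H.error_le H.radius_pos.le]
  have hscaled : ‖β‖ * ‖x - (conj β)⁻¹ • x₀‖ ≤ 16 / 15 * (D + t) * r := by
    rw [← RCLike.norm_conj, ← norm_smul, hsplit]
    linarith [norm_sub_le (conj c • x - x₀) (((t : 𝕜) * conj c) • x), H.right_error_le,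
      mul_nonneg H.error_nonneg H.radius_pos.le]
  linarith [mul_le_mul_of_nonneg_right hβ (norm_nonneg (x - (conj β)⁻¹ • x₀)),
    mul_nonneg (add_nonneg H.error_nonneg t_nonneg) H.radius_pos.le]

lemma norm_left_sub_shrunk_mul_norm_right_sub_shrunk_le (H : IsAlignment r D h h₀ x x₀ c)
    (t_nonneg : 0 ≤ t) (t_le : t ≤ 1 / 150) :
    ‖h - (((1 - t : ℝ) : 𝕜) * c) • h₀‖ * ‖x - (conj (((1 - t : ℝ) : 𝕜) * c))⁻¹ • x₀‖
      ≤ (D + t) * r ^ 2 / 5 := by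
  have hr := H.radius_pos.le
  have hDt : 0 ≤ D + t := add_nonneg H.error_nonneg t_nonneg
  calc _ ≤ (15 / 7 * (D + t) * r) * (5 / 4 * (D + t) * r) := by
        gcongr
        exacts [H.norm_left_sub_shrunk_le t_nonneg, H.norm_right_sub_shrunk_le t_nonneg t_le]
    _ = 75 / 28 * (D + t) * ((D + t) * r ^ 2) := by ring
    _ ≤ 75 / 28 * (11 / 150) * ((D + t) * r ^ 2) := by
        gcongr
        linarith [H.error_le]
    _ ≤ (D + t) * r ^ 2 / 5 := by linarith [mul_nonneg hDt (sq_nonneg r)]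

end IsAlignment

end Alignment

section Vectors

variable {n : ℕ}

lemma vnormSq_nonneg (v : Fin n → ℂ) : 0 ≤ vnormSq v :=
  sum_nonneg fun _ _ => sq_nonneg _

lemma vnorm_nonneg (v : Fin n → ℂ) : 0 ≤ vnorm v := Real.sqrt_nonneg _

lemma vnorm_sq (v : Fin n → ℂ) : vnorm v ^ 2 = vnormSq v :=
  Real.sq_sqrt (vnormSq_nonneg v)

lemma vnorm_eq_norm (v : Fin n → ℂ) : vnorm v = ‖WithLp.toLp 2 v‖ :=
  (EuclideanSpace.norm_eq _).symm

lemma vinner_eq_dotProduct (u v : Fin n → ℂ) : vinner u v = dotProduct (star u) v := rfl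

lemma vinner_eq_inner (u v : Fin n → ℂ) :
    vinner u v = inner ℂ (WithLp.toLp 2 u) (WithLp.toLp 2 v) := by
  rw [EuclideanSpace.inner_toLp_toLp, vinner_eq_dotProduct, dotProduct_comm]

lemma norm_vinner_le (u v : Fin n → ℂ) : ‖vinner u v‖ ≤ vnorm u * vnorm v := by
  simpa only [vinner_eq_inner, vnorm_eq_norm] using norm_inner_le_norm _ _

lemma conj_vinner (u v : Fin n → ℂ) : conj (vinner u v) = vinner v u := by
  simp only [vinner_eq_inner, inner_conj_symm]

lemma re_vinner_comm (u v : Fin n → ℂ) : (vinner u v).re = (vinner v u).re := by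
  rw [← conj_vinner, Complex.conj_re]

lemma vinner_self (v : Fin n → ℂ) : vinner v v = (vnormSq v : ℂ) := by
  simp only [vinner, vnormSq, Complex.ofReal_sum, Complex.conj_mul', Complex.ofReal_pow]

lemma vinner_add_left (u u' v : Fin n → ℂ) :
    vinner (u + u') v = vinner u v + vinner u' v := by
  simp only [vinner_eq_dotProduct, star_add, add_dotProduct]

lemma vinner_sub_left (u u' v : Fin n → ℂ) :
    vinner (u - u') v = vinner u v - vinner u' v := by
  simp only [vinner_eq_dotProduct, star_sub, sub_dotProduct]

lemma vinner_smul_left (c : ℂ) (u v : Fin n → ℂ) :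
    vinner (c • u) v = conj c * vinner u v := by
  simp only [vinner_eq_dotProduct, star_smul, smul_dotProduct, smul_eq_mul, starRingEnd_apply]

lemma vinner_add_right (u v v' : Fin n → ℂ) :
    vinner u (v + v') = vinner u v + vinner u v' := by
  simp only [vinner_eq_dotProduct, dotProduct_add]

lemma vinner_sub_right (u v v' : Fin n → ℂ) :
    vinner u (v - v') = vinner u v - vinner u v' := by
  simp only [vinner_eq_dotProduct, dotProduct_sub]

lemma vinner_smul_right (c : ℂ) (u v : Fin n → ℂ) :
    vinner u (c • v) = c * vinner u v := by
  simp only [vinner_eq_dotProduct, dotProduct_smul, smul_eq_mul]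

lemma vinner_sub_proj_left (u v : Fin n → ℂ) :
    vinner (u - (vinner v u / vnormSq v) • v) v = 0 := by
  rw [vinner_sub_left, vinner_smul_left, vinner_self, map_div₀, conj_vinner, Complex.conj_ofReal,
    sub_eq_zero, eq_comm]
  refine div_mul_cancel_of_imp fun hv => norm_le_zero_iff.1 ((norm_vinner_le u v).trans_eq ?_)
  rw [vnorm, vnorm, Complex.ofReal_eq_zero.1 hv, Real.sqrt_zero, mul_zero]

end Vectors

section Matrices

variable {K N : ℕ}

open scoped Matrix.Norms.L2Operator in
lemma opNorm_eq_l2_opNorm (Z : Matrix (Fin K) (Fin N) ℂ) : opNorm Z = ‖Z‖ := by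
  rw [Matrix.l2_opNorm_def, ← ContinuousLinearMap.sSup_unitClosedBall_eq_norm, opNorm]
  congr 1
  ext r
  constructor
  · rintro ⟨v, hv, rfl⟩
    exact ⟨WithLp.toLp 2 v, mem_closedBall_zero_iff.2 (vnorm_eq_norm v ▸ hv),
      (vnorm_eq_norm _).symm⟩
  · rintro ⟨v, hv, rfl⟩
    refine ⟨v.ofLp, ?_, (vnorm_eq_norm _).symm⟩
    simpa only [vnorm_eq_norm] using mem_closedBall_zero_iff.1 hv

lemma opNorm_nonneg (Z : Matrix (Fin K) (Fin N) ℂ) : 0 ≤ opNorm Z :=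
  Real.sSup_nonneg (by rintro _ ⟨v, -, rfl⟩; exact vnorm_nonneg _)

open scoped Matrix.Norms.L2Operator in
lemma vnorm_mulVec_le (Z : Matrix (Fin K) (Fin N) ℂ) (v : Fin N → ℂ) :
    vnorm (Z.mulVec v) ≤ opNorm Z * vnorm v := by
  rw [opNorm_eq_l2_opNorm, vnorm_eq_norm, vnorm_eq_norm]
  exact Matrix.l2_opNorm_mulVec Z (WithLp.toLp 2 v)

lemma frobSq_nonneg (Z : Matrix (Fin K) (Fin N) ℂ) : 0 ≤ frobSq Z :=
  sum_nonneg fun _ _ => sum_nonneg fun _ _ => sq_nonneg _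

lemma frob_nonneg (Z : Matrix (Fin K) (Fin N) ℂ) : 0 ≤ frob Z := Real.sqrt_nonneg _

lemma frob_sq (Z : Matrix (Fin K) (Fin N) ℂ) : frob Z ^ 2 = frobSq Z :=
  Real.sq_sqrt (frobSq_nonneg Z)

lemma frobSq_conjTranspose (Z : Matrix (Fin K) (Fin N) ℂ) :
    frobSq Z.conjTranspose = frobSq Z := by
  simp only [frobSq, Matrix.conjTranspose_apply, norm_star]
  exact sum_comm

lemma finner_add_left (Z Z' W : Matrix (Fin K) (Fin N) ℂ) :
    finner (Z + Z') W = finner Z W + finner Z' W := by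
  simp only [finner, Matrix.add_apply, map_add, add_mul, sum_add_distrib]

lemma frobSq_add (Z W : Matrix (Fin K) (Fin N) ℂ) :
    frobSq (Z + W) = frobSq Z + frobSq W + 2 * (finner Z W).re := by
  simp only [frobSq, finner, Complex.re_sum, mul_sum, ← sum_add_distrib]
  refine sum_congr rfl fun k _ => sum_congr rfl fun j _ => ?_
  rw [Matrix.add_apply, ← Complex.normSq_eq_norm_sq, Complex.normSq_add,
    ← Complex.conj_re (Z k j * conj (W k j)), map_mul, Complex.conj_conj]
  simp only [Complex.normSq_eq_norm_sq]

lemma rankOne_mulVec (u : Fin K → ℂ) (v w : Fin N → ℂ) :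
    (rankOne u v).mulVec w = vinner v w • u := by
  ext k
  simp only [Matrix.mulVec, dotProduct, rankOne, Matrix.of_apply, vinner, Pi.smul_apply,
    smul_eq_mul, sum_mul]
  exact sum_congr rfl fun j _ => by ring

lemma conjTranspose_rankOne (u : Fin K → ℂ) (v : Fin N → ℂ) :
    (rankOne u v).conjTranspose = rankOne v u := by
  ext j k
  simp only [rankOne, Matrix.conjTranspose_apply, Matrix.of_apply, star_mul', RCLike.star_def,
    Complex.conj_conj, mul_comm]

lemma frobSq_rankOne (u : Fin K → ℂ) (v : Fin N → ℂ) :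
    frobSq (rankOne u v) = vnormSq u * vnormSq v := by
  simp only [frobSq, rankOne, Matrix.of_apply, norm_mul, RCLike.norm_conj, mul_pow, vnormSq,
    sum_mul_sum]

lemma finner_rankOne_left (u : Fin K → ℂ) (v : Fin N → ℂ) (M : Matrix (Fin K) (Fin N) ℂ) :
    finner (rankOne u v) M = vinner u (M.mulVec v) := by
  simp only [finner, rankOne, vinner, Matrix.mulVec, dotProduct, Matrix.of_apply, map_mul,
    Complex.conj_conj, mul_sum]
  exact sum_congr rfl fun k _ => sum_congr rfl fun j _ => by ring

lemma vinner_conjTranspose_mulVec (M : Matrix (Fin K) (Fin N) ℂ) (u : Fin K → ℂ)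
    (v : Fin N → ℂ) : vinner (M.conjTranspose.mulVec u) v = vinner u (M.mulVec v) := by
  rw [vinner_eq_dotProduct, vinner_eq_dotProduct, Matrix.star_mulVec,
    Matrix.conjTranspose_conjTranspose, Matrix.dotProduct_mulVec]

lemma norm_finner_rankOne_le (u : Fin K → ℂ) (v : Fin N → ℂ) (M : Matrix (Fin K) (Fin N) ℂ) :
    ‖finner (rankOne u v) M‖ ≤ opNorm M * (vnorm u * vnorm v) := by
  rw [finner_rankOne_left]
  calc _ ≤ vnorm u * vnorm (M.mulVec v) := norm_vinner_le _ _
    _ ≤ vnorm u * (opNorm M * vnorm v) :=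
      mul_le_mul_of_nonneg_left (vnorm_mulVec_le M v) (vnorm_nonneg u)
    _ = opNorm M * (vnorm u * vnorm v) := by ring

lemma rankOne_sub_rankOne (h h₀ : Fin K → ℂ) (x x₀ : Fin N → ℂ) (c : ℂ) :
    rankOne h x - rankOne h₀ x₀ = rankOne (h - c • h₀) x + rankOne h₀ (conj c • x - x₀) := by
  ext k j
  simp only [rankOne, Matrix.sub_apply, Matrix.add_apply, Matrix.of_apply, Pi.sub_apply,
    Pi.smul_apply, smul_eq_mul, map_sub, map_mul, Complex.conj_conj]
  ring

lemma frob_rankOne_sub_rankOne_comm (h h₀ : Fin K → ℂ) (x x₀ : Fin N → ℂ) :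
    frob (rankOne x h - rankOne x₀ h₀) = frob (rankOne h x - rankOne h₀ x₀) := by
  rw [frob, ← frobSq_conjTranspose, Matrix.conjTranspose_sub, conjTranspose_rankOne,
    conjTranspose_rankOne, frob]

lemma frob_sq_rankOne_sub_rankOne (h h₀ : Fin K → ℂ) (x x₀ : Fin N → ℂ) :
    frob (rankOne h x - rankOne h₀ x₀) ^ 2
      = (vnorm (h - (vinner h₀ h / vnormSq h₀) • h₀) * vnorm x) ^ 2
        + (vnorm h₀ * vnorm (conj (vinner h₀ h / vnormSq h₀) • x - x₀)) ^ 2 := by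
  rw [rankOne_sub_rankOne h h₀ x x₀ (vinner h₀ h / vnormSq h₀), frob_sq, frobSq_add,
    finner_rankOne_left, rankOne_mulVec, vinner_smul_right, vinner_sub_proj_left]
  simp only [frobSq_rankOne, ← vnorm_sq, mul_pow, mul_zero, Complex.zero_re, add_zero]

lemma norm_finner_rankOne_sub_rankOne_le (h h₀ : Fin K → ℂ) (x x₀ : Fin N → ℂ)
    (M : Matrix (Fin K) (Fin N) ℂ) :
    ‖finner (rankOne h x - rankOne h₀ x₀) M‖
      ≤ opNorm M * (Real.sqrt 2 * frob (rankOne h x - rankOne h₀ x₀)) := by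
  have hpyth := frob_sq_rankOne_sub_rankOne h h₀ x x₀
  set c : ℂ := vinner h₀ h / vnormSq h₀
  set p := vnorm (h - c • h₀) * vnorm x
  set q := vnorm h₀ * vnorm (conj c • x - x₀)
  have hpq : p + q ≤ Real.sqrt 2 * frob (rankOne h x - rankOne h₀ x₀) := by
    refine le_of_sq_le_sq ?_ (mul_nonneg (Real.sqrt_nonneg _) (frob_nonneg _))
    rw [mul_pow, Real.sq_sqrt zero_le_two, hpyth]
    exact add_sq_le
  calc _ ≤ opNorm M * p + opNorm M * q := by
        rw [rankOne_sub_rankOne h h₀ x x₀ c, finner_add_left]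
        exact norm_add_le_of_le (norm_finner_rankOne_le _ _ M) (norm_finner_rankOne_le _ _ M)
    _ = opNorm M * (p + q) := by ring
    _ ≤ _ := mul_le_mul_of_nonneg_left hpq (opNorm_nonneg M)

end Matrices

section Measurement

variable {K N L s : ℕ} (b : Fin L → Fin K → ℂ) (a : Fin s → Fin L → Fin N → ℂ)

lemma AadjNorm_nonneg (z : Fin L → ℂ) : 0 ≤ AadjNorm b a z :=
  Real.iSup_nonneg fun _ => opNorm_nonneg _

lemma opNorm_calAdj_le (z : Fin L → ℂ) (i : Fin s) :
    opNorm (calAdj b (a i) z) ≤ AadjNorm b a z :=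
  le_ciSup (f := fun i => opNorm (calAdj b (a i) z)) (Set.finite_range _).bddAbove i

lemma vinner_calAi (a₁ : Fin L → Fin N → ℂ) (Z : Matrix (Fin K) (Fin N) ℂ) (z : Fin L → ℂ) :
    vinner (calAi b a₁ Z) z = finner Z (calAdj b a₁ z) := by
  simp only [vinner, calAi, finner, calAdj, Matrix.mulVec, dotProduct, Matrix.of_apply, map_sum,
    map_mul, Complex.conj_conj, mul_sum, sum_mul]
  rw [sum_comm]
  refine sum_congr rfl fun k _ => ?_
  rw [sum_comm]
  exact sum_congr rfl fun j _ => sum_congr rfl fun l _ => by ring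

lemma vinner_calA (Z : Fin s → Matrix (Fin K) (Fin N) ℂ) (z : Fin L → ℂ) :
    vinner (calA b a Z) z = ∑ i, finner (Z i) (calAdj b (a i) z) := by
  simp only [← vinner_calAi]
  simp only [vinner, calA, map_sum, sum_mul]
  exact sum_comm

lemma calA_add (Z W : Fin s → Matrix (Fin K) (Fin N) ℂ) :
    calA b a (Z + W) = calA b a Z + calA b a W := by
  ext l
  simp only [calA, calAi, Pi.add_apply, Matrix.add_mulVec, vinner_add_right, sum_add_distrib]

lemma calA_sub (Z W : Fin s → Matrix (Fin K) (Fin N) ℂ) :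
    calA b a (Z - W) = calA b a Z - calA b a W := by
  ext l
  simp only [calA, calAi, Pi.sub_apply, Matrix.sub_mulVec, vinner_sub_right, sum_sub_distrib]

lemma residual_eq (h0 : Fin s → Fin K → ℂ) (x0 : Fin s → Fin N → ℂ) (e : Fin L → ℂ)
    (h : Fin s → Fin K → ℂ) (x : Fin s → Fin N → ℂ) :
    residual b a h0 x0 e h x = calA b a (Hmap h x - Hmap h0 x0) - e := by
  rw [calA_sub, sub_sub]
  rfl

/-- The differential at `(h, x)` of the real-bilinear map `ℋ`, in the direction `(u, v)`. -/
def HmapDeriv (h : Fin s → Fin K → ℂ) (x : Fin s → Fin N → ℂ) (u : Fin s → Fin K → ℂ)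
    (v : Fin s → Fin N → ℂ) : Fin s → Matrix (Fin K) (Fin N) ℂ :=
  fun i => rankOne (u i) (x i) + rankOne (h i) (v i)

lemma re_gradF_pairing (h0 : Fin s → Fin K → ℂ) (x0 : Fin s → Fin N → ℂ) (e : Fin L → ℂ)
    (h : Fin s → Fin K → ℂ) (x : Fin s → Fin N → ℂ) (u : Fin s → Fin K → ℂ)
    (v : Fin s → Fin N → ℂ) :
    (∑ i, vinner (gradFh b a h0 x0 e h x i) (u i)
        + ∑ i, vinner (gradFx b a h0 x0 e h x i) (v i)).re
      = (vinner (calA b a (HmapDeriv h x u v)) (residual b a h0 x0 e h x)).re := by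
  rw [vinner_calA, ← sum_add_distrib, Complex.re_sum, Complex.re_sum]
  refine sum_congr rfl fun i _ => ?_
  rw [HmapDeriv, finner_add_left, finner_rankOne_left, finner_rankOne_left, gradFh, gradFx,
    vinner_conjTranspose_mulVec, Complex.add_re, Complex.add_re, re_vinner_comm]

lemma HmapDeriv_dh_dx {h0 : Fin s → Fin K → ℂ} {x0 : Fin s → Fin N → ℂ} {d0 : Fin s → ℝ}
    {h : Fin s → Fin K → ℂ} {x : Fin s → Fin N → ℂ} (hα : ∀ i, alphaC h0 x0 d0 h x i ≠ 0) :
    HmapDeriv h x (dh h0 x0 d0 h x) (dx h0 x0 d0 h x)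
      = (Hmap h x - Hmap h0 x0) + Hmap (dh h0 x0 d0 h x) (dx h0 x0 d0 h x) := by
  ext i k j
  simp only [HmapDeriv, Hmap, dh, dx, rankOne, Matrix.add_apply, Matrix.of_apply, Pi.add_apply,
    Pi.sub_apply, Matrix.sub_apply, map_sub, map_mul, map_inv₀, Complex.conj_conj]
  field [hα i]

end Measurement

section Increments

lemma deltaI_nonneg {K N : ℕ} (h₀ : Fin K → ℂ) (x₀ : Fin N → ℂ) {d : ℝ} (hd : 0 ≤ d)
    (h : Fin K → ℂ) (x : Fin N → ℂ) : 0 ≤ deltaI h₀ x₀ d h x :=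
  div_nonneg (frob_nonneg _) hd

lemma deltaI_mul {K N : ℕ} (h₀ : Fin K → ℂ) (x₀ : Fin N → ℂ) {d : ℝ} (hd : d ≠ 0)
    (h : Fin K → ℂ) (x : Fin N → ℂ) :
    deltaI h₀ x₀ d h x * d = frob (rankOne h x - rankOne h₀ x₀) :=
  div_mul_cancel₀ _ hd

lemma deltaI_comm {K N : ℕ} (h₀ h : Fin K → ℂ) (x₀ x : Fin N → ℂ) (d : ℝ) :
    deltaI x₀ h₀ d x h = deltaI h₀ x₀ d h x := by
  rw [deltaI, frob_rankOne_sub_rankOne_comm, deltaI]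

lemma isAlignment_of_vnorm_le {K N : ℕ} {d : ℝ} {h h₀ : Fin K → ℂ} {x x₀ : Fin N → ℂ}
    (hd : 0 < d) (hh₀ : vnorm h₀ = Real.sqrt d) (hx₀ : vnorm x₀ = Real.sqrt d)
    (hxh : vnorm x ≤ vnorm h) (hh : vnorm h ≤ 2 * Real.sqrt d)
    (hδ : deltaI h₀ x₀ d h x ≤ 1 / 15) :
    IsAlignment (Real.sqrt d) (deltaI h₀ x₀ d h x) (WithLp.toLp 2 h) (WithLp.toLp 2 h₀)
      (WithLp.toLp 2 x) (WithLp.toLp 2 x₀) (vinner h₀ h / (d : ℂ)) := by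
  have hr : 0 < Real.sqrt d := Real.sqrt_pos.2 hd
  have hfrob := deltaI_mul h₀ x₀ hd.ne' h x
  have hpyth := frob_sq_rankOne_sub_rankOne h h₀ x x₀
  rw [← vnorm_sq, hh₀, Real.sq_sqrt hd.le] at hpyth
  have hcoeff : ‖vinner h₀ h / (d : ℂ)‖ * Real.sqrt d ≤ vnorm h := by
    rw [norm_div, Complex.norm_of_nonneg hd.le, div_mul_eq_mul_div, div_le_iff₀ hd]
    calc _ ≤ vnorm h₀ * vnorm h * Real.sqrt d :=
          mul_le_mul_of_nonneg_right (norm_vinner_le h₀ h) hr.le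
      _ = vnorm h * Real.sqrt d ^ 2 := by rw [hh₀]; ring
      _ = vnorm h * d := by rw [Real.sq_sqrt hd.le]
  set c : ℂ := vinner h₀ h / (d : ℂ)
  have hleft : vnorm (h - c • h₀) * vnorm x ≤ deltaI h₀ x₀ d h x * Real.sqrt d ^ 2 := by
    rw [Real.sq_sqrt hd.le, hfrob]
    exact le_of_sq_le_sq (hpyth ▸ le_add_of_nonneg_right (sq_nonneg _)) (frob_nonneg _)
  have hright : vnorm (conj c • x - x₀) ≤ deltaI h₀ x₀ d h x * Real.sqrt d := by
    refine le_of_mul_le_mul_left ?_ hr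
    rw [mul_left_comm, Real.mul_self_sqrt hd.le, hfrob]
    exact le_of_sq_le_sq (hpyth ▸ le_add_of_nonneg_left (sq_nonneg _)) (frob_nonneg _)
  simp only [vnorm_eq_norm] at hh₀ hx₀ hxh hh hcoeff hleft hright
  exact ⟨hr, hδ, hh₀, hx₀, hxh, hh, hcoeff, hleft, hright⟩

/-- The normalisation `‖h_{i0}‖ = ‖x_{i0}‖ = √d_{i0} > 0` of the ground truth. -/
structure IsBalanced {K N s : ℕ} (h0 : Fin s → Fin K → ℂ) (x0 : Fin s → Fin N → ℂ)
    (d0 : Fin s → ℝ) : Prop where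
  pos : ∀ i, 0 < d0 i
  vnorm_left : ∀ i, vnorm (h0 i) = Real.sqrt (d0 i)
  vnorm_right : ∀ i, vnorm (x0 i) = Real.sqrt (d0 i)

/-- The size `(δᵢ + δ₀) d_{i0}` of the second-order error `‖Δhᵢ‖ ‖Δxᵢ‖`, up to a constant factor:
`δᵢ` comes from aligning the `i`-th block and `δ₀` from shrinking the alignment coefficient. -/
def incrementScale {K N s : ℕ} (h0 : Fin s → Fin K → ℂ) (x0 : Fin s → Fin N → ℂ)
    (d0 : Fin s → ℝ) (h : Fin s → Fin K → ℂ) (x : Fin s → Fin N → ℂ) (i : Fin s) : ℝ :=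
  (deltaI (h0 i) (x0 i) (d0 i) (h i) (x i) + delta0 h0 x0 d0 h x) * d0 i

variable {K N s : ℕ} {h0 h : Fin s → Fin K → ℂ} {x0 x : Fin s → Fin N → ℂ} {d0 : Fin s → ℝ}

lemma famFrobSq_nonneg (Z : Fin s → Matrix (Fin K) (Fin N) ℂ) : 0 ≤ famFrobSq Z :=
  sum_nonneg fun _ _ => frobSq_nonneg _

lemma famFrob_sq (Z : Fin s → Matrix (Fin K) (Fin N) ℂ) : famFrob Z ^ 2 = famFrobSq Z :=
  Real.sq_sqrt (famFrobSq_nonneg Z)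

lemma dtot_sq (d0 : Fin s → ℝ) : dtot d0 ^ 2 = ∑ i, d0 i ^ 2 :=
  Real.sq_sqrt (sum_nonneg fun _ _ => sq_nonneg _)

lemma delta0_nonneg : 0 ≤ delta0 h0 x0 d0 h x :=
  div_nonneg (div_nonneg (Real.sqrt_nonneg _) (Real.sqrt_nonneg _)) (by norm_num)

lemma vnorm_dh (i : Fin s) :
    vnorm (dh h0 x0 d0 h x i)
      = ‖WithLp.toLp 2 (h i) - alphaC h0 x0 d0 h x i • WithLp.toLp 2 (h0 i)‖ :=
  vnorm_eq_norm _

lemma vnorm_dx (i : Fin s) :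
    vnorm (dx h0 x0 d0 h x i)
      = ‖WithLp.toLp 2 (x i) - (conj (alphaC h0 x0 d0 h x i))⁻¹ • WithLp.toLp 2 (x0 i)‖ :=
  vnorm_eq_norm _

namespace IsBalanced

lemma dtot_pos (H : IsBalanced h0 x0 d0) (hs : 0 < s) : 0 < dtot d0 :=
  Real.sqrt_pos.2 (sum_pos (fun i _ => pow_pos (H.pos i) 2) ⟨⟨0, hs⟩, mem_univ _⟩)

lemma deltaTot_mul_dtot (H : IsBalanced h0 x0 d0) (hs : 0 < s) :
    deltaTot h0 x0 d0 h x * dtot d0 = famFrob (Hmap h x - Hmap h0 x0) :=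
  div_mul_cancel₀ _ (H.dtot_pos hs).ne'

lemma sum_deltaI_mul_sq (H : IsBalanced h0 x0 d0) :
    ∑ i, (deltaI (h0 i) (x0 i) (d0 i) (h i) (x i) * d0 i) ^ 2
      = famFrobSq (Hmap h x - Hmap h0 x0) :=
  sum_congr rfl fun i _ => by
    rw [deltaI_mul _ _ (H.pos i).ne', frob_sq, Pi.sub_apply, Hmap, Hmap]

lemma deltaTot_le (H : IsBalanced h0 x0 d0) {ε : ℝ} (hε : 0 ≤ ε) (hNε : inNeps h0 x0 d0 ε h x) :
    deltaTot h0 x0 d0 h x ≤ ε := by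
  refine div_le_of_le_mul₀ (Real.sqrt_nonneg _) hε (Real.sqrt_le_iff.2
    ⟨mul_nonneg hε (Real.sqrt_nonneg _), ?_⟩)
  calc famFrobSq (Hmap h x - Hmap h0 x0)
      = ∑ i, (deltaI (h0 i) (x0 i) (d0 i) (h i) (x i) * d0 i) ^ 2 := H.sum_deltaI_mul_sq.symm
    _ ≤ ∑ i, (ε * d0 i) ^ 2 := sum_le_sum fun i _ =>
        have hδ := deltaI_nonneg (h0 i) (x0 i) (H.pos i).le (h i) (x i)
        pow_le_pow_left₀ (mul_nonneg hδ (H.pos i).le)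
          (mul_le_mul_of_nonneg_right (hNε i) (H.pos i).le) 2
    _ = (ε * dtot d0) ^ 2 := by simp only [mul_pow, dtot_sq, mul_sum]

lemma delta0_le (H : IsBalanced h0 x0 d0) (hNε : inNeps h0 x0 d0 (1 / 15) h x) :
    delta0 h0 x0 d0 h x ≤ 1 / 150 := by
  have := H.deltaTot_le (by norm_num) hNε
  rw [delta0]
  linarith

lemma incrementScale_nonneg (H : IsBalanced h0 x0 d0) (i : Fin s) :
    0 ≤ incrementScale h0 x0 d0 h x i :=
  mul_nonneg (add_nonneg (deltaI_nonneg _ _ (H.pos i).le _ _) delta0_nonneg) (H.pos i).le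

lemma frob_le_incrementScale (H : IsBalanced h0 x0 d0) (i : Fin s) :
    frob (rankOne (h i) (x i) - rankOne (h0 i) (x0 i)) ≤ incrementScale h0 x0 d0 h x i := by
  rw [← deltaI_mul _ _ (H.pos i).ne']
  exact mul_le_mul_of_nonneg_right (le_add_of_nonneg_right delta0_nonneg) (H.pos i).le

lemma sum_incrementScale_sq_le (H : IsBalanced h0 x0 d0) (hs : 0 < s) :
    ∑ i, incrementScale h0 x0 d0 h x i ^ 2 ≤ 1.21 * famFrobSq (Hmap h x - Hmap h0 x0) := by
  have hshrink : ∑ i, (delta0 h0 x0 d0 h x * d0 i) ^ 2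
      = famFrobSq (Hmap h x - Hmap h0 x0) / 100 := by
    simp only [mul_pow, ← mul_sum]
    rw [← dtot_sq, ← famFrob_sq, ← H.deltaTot_mul_dtot hs, delta0]
    ring
  calc ∑ i, incrementScale h0 x0 d0 h x i ^ 2
      ≤ ∑ i, (1.1 * (deltaI (h0 i) (x0 i) (d0 i) (h i) (x i) * d0 i) ^ 2
          + 11 * (delta0 h0 x0 d0 h x * d0 i) ^ 2) := sum_le_sum fun i _ => by
        rw [incrementScale]
        linarith [sq_nonneg (deltaI (h0 i) (x0 i) (d0 i) (h i) (x i) * d0 i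
          - 10 * (delta0 h0 x0 d0 h x * d0 i))]
    _ = 1.21 * famFrobSq (Hmap h x - Hmap h0 x0) := by
        rw [sum_add_distrib, ← mul_sum, ← mul_sum, H.sum_deltaI_mul_sq, hshrink]
        ring

lemma sum_incrementScale_le (H : IsBalanced h0 x0 d0) (hs : 0 < s) :
    ∑ i, incrementScale h0 x0 d0 h x i
      ≤ 1.1 * (Real.sqrt s * famFrob (Hmap h x - Hmap h0 x0)) := by
  have hcs := sq_sum_le_card_mul_sum_sq (s := univ) (f := incrementScale h0 x0 d0 h x)
  rw [card_univ, Fintype.card_fin] at hcs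
  refine le_of_sq_le_sq (hcs.trans ?_) (mul_nonneg (by norm_num) (mul_nonneg
    (Real.sqrt_nonneg _) (Real.sqrt_nonneg _)))
  rw [mul_pow, mul_pow, Real.sq_sqrt s.cast_nonneg, famFrob_sq]
  linarith [mul_le_mul_of_nonneg_left (H.sum_incrementScale_sq_le (h := h) (x := x) hs)
    (s.cast_nonneg (α := ℝ))]

lemma exists_isAlignment_alphaC (H : IsBalanced h0 x0 d0) (hNd : inNd d0 h x)
    (hNε : inNeps h0 x0 d0 (1 / 15) h x) (i : Fin s) :
    (∃ c : ℂ, IsAlignment (Real.sqrt (d0 i)) (deltaI (h0 i) (x0 i) (d0 i) (h i) (x i))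
        (WithLp.toLp 2 (h i)) (WithLp.toLp 2 (h0 i)) (WithLp.toLp 2 (x i))
        (WithLp.toLp 2 (x0 i)) c ∧
      alphaC h0 x0 d0 h x i = ((1 - delta0 h0 x0 d0 h x : ℝ) : ℂ) * c) ∨
    (∃ c : ℂ, IsAlignment (Real.sqrt (d0 i)) (deltaI (h0 i) (x0 i) (d0 i) (h i) (x i))
        (WithLp.toLp 2 (x i)) (WithLp.toLp 2 (x0 i)) (WithLp.toLp 2 (h i))
        (WithLp.toLp 2 (h0 i)) c ∧
      (conj (alphaC h0 x0 d0 h x i))⁻¹ = ((1 - delta0 h0 x0 d0 h x : ℝ) : ℂ) * c) := by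
  rcases le_or_gt (vnorm (x i)) (vnorm (h i)) with hxh | hhx
  · refine .inl ⟨alpha1 h0 d0 h i, isAlignment_of_vnorm_le (H.pos i) (H.vnorm_left i)
      (H.vnorm_right i) hxh (hNd i).1 (hNε i), ?_⟩
    rw [alphaC, if_pos hxh]
  · refine .inr ⟨alpha2 x0 d0 x i, ?_, ?_⟩
    · rw [← deltaI_comm]
      exact isAlignment_of_vnorm_le (H.pos i) (H.vnorm_right i) (H.vnorm_left i) hhx.le
        (hNd i).2 ((deltaI_comm _ _ _ _ _).trans_le (hNε i))
    · rw [alphaC, if_neg hhx.not_ge, one_div, map_inv₀, inv_inv, map_mul, Complex.conj_conj,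
        Complex.conj_ofReal]

lemma alphaC_ne_zero (H : IsBalanced h0 x0 d0) (hNd : inNd d0 h x)
    (hNε : inNeps h0 x0 d0 (1 / 15) h x) (i : Fin s) : alphaC h0 x0 d0 h x i ≠ 0 := by
  have ht := H.delta0_le hNε
  rcases H.exists_isAlignment_alphaC hNd hNε i with ⟨c, hc, hα⟩ | ⟨c, hc, hα⟩
  · rw [hα, ← norm_pos_iff]
    exact lt_of_lt_of_le (by norm_num) (hc.le_norm_shrunk_coeff ht)
  · refine fun hzero => absurd (hc.le_norm_shrunk_coeff ht) ?_
    rw [RCLike.ofReal_eq_complex_ofReal, ← hα, hzero]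
    norm_num

lemma norm_alphaC_le (H : IsBalanced h0 x0 d0) (hNd : inNd d0 h x)
    (hNε : inNeps h0 x0 d0 (1 / 15) h x) (i : Fin s) : ‖alphaC h0 x0 d0 h x i‖ ≤ 2 := by
  have ht := H.delta0_le hNε
  rcases H.exists_isAlignment_alphaC hNd hNε i with ⟨c, hc, hα⟩ | ⟨c, hc, hα⟩
  · rw [hα]
    exact hc.norm_shrunk_coeff_le delta0_nonneg ht
  · have hlower := hc.le_norm_shrunk_coeff ht
    rw [RCLike.ofReal_eq_complex_ofReal, ← hα, norm_inv, RCLike.norm_conj] at hlower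
    have hupper := inv_anti₀ (by norm_num) hlower
    rw [inv_inv] at hupper
    exact hupper.trans (by norm_num)

lemma vnorm_dh_mul_vnorm_dx_le (H : IsBalanced h0 x0 d0) (hNd : inNd d0 h x)
    (hNε : inNeps h0 x0 d0 (1 / 15) h x) (i : Fin s) :
    vnorm (dh h0 x0 d0 h x i) * vnorm (dx h0 x0 d0 h x i)
      ≤ incrementScale h0 x0 d0 h x i / 5 := by
  have ht := H.delta0_le hNε
  have hq : incrementScale h0 x0 d0 h x i
      = (deltaI (h0 i) (x0 i) (d0 i) (h i) (x i) + delta0 h0 x0 d0 h x) * Real.sqrt (d0 i) ^ 2 := by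
    rw [Real.sq_sqrt (H.pos i).le, incrementScale]
  rw [vnorm_dh, vnorm_dx, hq]
  rcases H.exists_isAlignment_alphaC hNd hNε i with ⟨c, hc, hα⟩ | ⟨c, hc, hα⟩
  · rw [hα]
    exact hc.norm_left_sub_shrunk_mul_norm_right_sub_shrunk_le delta0_nonneg ht
  · have hα' : alphaC h0 x0 d0 h x i = (conj (((1 - delta0 h0 x0 d0 h x : ℝ) : ℂ) * c))⁻¹ := by
      rw [← hα, map_inv₀, Complex.conj_conj, inv_inv]
    rw [mul_comm, hα, hα']
    exact hc.norm_left_sub_shrunk_mul_norm_right_sub_shrunk_le delta0_nonneg ht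

lemma vnorm_dx_mul_sqrt_le (H : IsBalanced h0 x0 d0) (hNd : inNd d0 h x)
    (hNε : inNeps h0 x0 d0 (1 / 15) h x) (i : Fin s) :
    vnorm (dx h0 x0 d0 h x i) * Real.sqrt (d0 i) ≤ 3 * incrementScale h0 x0 d0 h x i := by
  have hq := H.incrementScale_nonneg (h := h) (x := x) i
  suffices ∃ κ : ℝ, κ ≤ 3 ∧ vnorm (dx h0 x0 d0 h x i)
      ≤ κ * (deltaI (h0 i) (x0 i) (d0 i) (h i) (x i) + delta0 h0 x0 d0 h x)
        * Real.sqrt (d0 i) by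
    obtain ⟨κ, hκ, hle⟩ := this
    calc vnorm (dx h0 x0 d0 h x i) * Real.sqrt (d0 i)
        ≤ κ * (deltaI (h0 i) (x0 i) (d0 i) (h i) (x i) + delta0 h0 x0 d0 h x)
          * Real.sqrt (d0 i) * Real.sqrt (d0 i) :=
          mul_le_mul_of_nonneg_right hle (Real.sqrt_nonneg _)
      _ = κ * incrementScale h0 x0 d0 h x i := by
          rw [mul_assoc, Real.mul_self_sqrt (H.pos i).le, incrementScale, mul_assoc]
      _ ≤ 3 * incrementScale h0 x0 d0 h x i := mul_le_mul_of_nonneg_right hκ hq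
  rw [vnorm_dx]
  rcases H.exists_isAlignment_alphaC hNd hNε i with ⟨c, hc, hα⟩ | ⟨c, hc, hα⟩
  · rw [hα]
    exact ⟨5 / 4, by norm_num, hc.norm_right_sub_shrunk_le delta0_nonneg (H.delta0_le hNε)⟩
  · rw [hα]
    exact ⟨15 / 7, by norm_num, hc.norm_left_sub_shrunk_le delta0_nonneg⟩

lemma famFrobSq_Hmap_dh_dx_le (H : IsBalanced h0 x0 d0) (hs : 0 < s) (hNd : inNd d0 h x)
    (hNε : inNeps h0 x0 d0 (1 / 15) h x) :
    famFrobSq (Hmap (dh h0 x0 d0 h x) (dx h0 x0 d0 h x))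
      ≤ 0.05 * famFrobSq (Hmap h x - Hmap h0 x0) := by
  calc famFrobSq (Hmap (dh h0 x0 d0 h x) (dx h0 x0 d0 h x))
      = ∑ i, (vnorm (dh h0 x0 d0 h x i) * vnorm (dx h0 x0 d0 h x i)) ^ 2 :=
        sum_congr rfl fun i _ => by rw [Hmap, frobSq_rankOne, mul_pow, vnorm_sq, vnorm_sq]
    _ ≤ ∑ i, (incrementScale h0 x0 d0 h x i / 5) ^ 2 := sum_le_sum fun i _ =>
        pow_le_pow_left₀ (mul_nonneg (vnorm_nonneg _) (vnorm_nonneg _))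
          (H.vnorm_dh_mul_vnorm_dx_le hNd hNε i) 2
    _ = (∑ i, incrementScale h0 x0 d0 h x i ^ 2) / 25 := by
        simp only [div_pow, ← sum_div]
        norm_num
    _ ≤ 0.05 * famFrobSq (Hmap h x - Hmap h0 x0) := by
        linarith [H.sum_incrementScale_sq_le (h := h) (x := x) hs,
          famFrobSq_nonneg (Hmap h x - Hmap h0 x0)]

variable {L : ℕ} {b : Fin L → Fin K → ℂ} {μ : ℝ}

lemma sqrt_mul_norm_vinner_dh_le (H : IsBalanced h0 x0 d0) (hμh : muhLe b h0 μ)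
    (hNd : inNd d0 h x) (hNμ : inNmu b d0 μ h) (hNε : inNeps h0 x0 d0 (1 / 15) h x)
    (i : Fin s) (l : Fin L) :
    Real.sqrt L * ‖vinner (b l) (dh h0 x0 d0 h x i)‖ ≤ 6 * (Real.sqrt (d0 i) * μ) := by
  have hground := hμh i l
  rw [H.vnorm_left] at hground
  calc Real.sqrt L * ‖vinner (b l) (dh h0 x0 d0 h x i)‖
      = Real.sqrt L * ‖vinner (b l) (h i) - alphaC h0 x0 d0 h x i * vinner (b l) (h0 i)‖ := by
        rw [← vinner_smul_right, ← vinner_sub_right]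
        rfl
    _ ≤ Real.sqrt L * (‖vinner (b l) (h i)‖ + 2 * ‖vinner (b l) (h0 i)‖) := by
        refine mul_le_mul_of_nonneg_left ((norm_sub_le _ _).trans ?_) (Real.sqrt_nonneg _)
        rw [norm_mul]
        gcongr
        exact H.norm_alphaC_le hNd hNε i
    _ ≤ 6 * (Real.sqrt (d0 i) * μ) := by linarith [hNμ i l]

lemma mul_norm_vinner_dh_sq_mul_vnormSq_dx_le (H : IsBalanced h0 x0 d0) (hμh : muhLe b h0 μ)
    (hNd : inNd d0 h x) (hNμ : inNmu b d0 μ h) (hNε : inNeps h0 x0 d0 (1 / 15) h x)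
    (i : Fin s) (l : Fin L) :
    L * (‖vinner (b l) (dh h0 x0 d0 h x i)‖ ^ 2 * vnormSq (dx h0 x0 d0 h x i))
      ≤ 324 * μ ^ 2 * incrementScale h0 x0 d0 h x i ^ 2 := by
  calc L * (‖vinner (b l) (dh h0 x0 d0 h x i)‖ ^ 2 * vnormSq (dx h0 x0 d0 h x i))
      = (Real.sqrt L * ‖vinner (b l) (dh h0 x0 d0 h x i)‖) ^ 2
          * vnorm (dx h0 x0 d0 h x i) ^ 2 := by
        rw [mul_pow, Real.sq_sqrt L.cast_nonneg, vnorm_sq, mul_assoc]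
    _ ≤ (6 * (Real.sqrt (d0 i) * μ)) ^ 2 * vnorm (dx h0 x0 d0 h x i) ^ 2 := by
        gcongr ?_ ^ 2 * _
        exact H.sqrt_mul_norm_vinner_dh_le hμh hNd hNμ hNε i l
    _ = 36 * μ ^ 2 * (vnorm (dx h0 x0 d0 h x i) * Real.sqrt (d0 i)) ^ 2 := by ring
    _ ≤ 36 * μ ^ 2 * (3 * incrementScale h0 x0 d0 h x i) ^ 2 :=
        mul_le_mul_of_nonneg_left
          (pow_le_pow_left₀ (mul_nonneg (vnorm_nonneg _) (Real.sqrt_nonneg _))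
            (H.vnorm_dx_mul_sqrt_le hNd hNε i) 2) (by positivity)
    _ = 324 * μ ^ 2 * incrementScale h0 x0 d0 h x i ^ 2 := by ring

lemma mul_sigmaMaxSq_dh_dx_le (H : IsBalanced h0 x0 d0) (hL : 0 < L) (hs : 0 < s)
    (hμh : muhLe b h0 μ) (hNd : inNd d0 h x) (hNμ : inNmu b d0 μ h)
    (hNε : inNeps h0 x0 d0 (1 / 15) h x) :
    L * sigmaMaxSq b (dh h0 x0 d0 h x) (dx h0 x0 d0 h x)
      ≤ 400 * μ ^ 2 * famFrobSq (Hmap h x - Hmap h0 x0) := by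
  have hLpos : (0 : ℝ) < L := Nat.cast_pos.2 hL
  have : Nonempty (Fin L) := ⟨⟨0, hL⟩⟩
  rw [← le_div_iff₀' hLpos]
  refine ciSup_le fun l => ?_
  rw [le_div_iff₀' hLpos, mul_sum]
  calc ∑ i, L * (‖vinner (b l) (dh h0 x0 d0 h x i)‖ ^ 2 * vnormSq (dx h0 x0 d0 h x i))
      ≤ 324 * μ ^ 2 * ∑ i, incrementScale h0 x0 d0 h x i ^ 2 := by
        rw [mul_sum]
        exact sum_le_sum fun i _ =>
          H.mul_norm_vinner_dh_sq_mul_vnormSq_dx_le hμh hNd hNμ hNε i l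
    _ ≤ 324 * μ ^ 2 * (1.21 * famFrobSq (Hmap h x - Hmap h0 x0)) :=
        mul_le_mul_of_nonneg_left (H.sum_incrementScale_sq_le hs) (by positivity)
    _ ≤ 400 * μ ^ 2 * famFrobSq (Hmap h x - Hmap h0 x0) := by
        linarith [mul_nonneg (sq_nonneg μ) (famFrobSq_nonneg (Hmap h x - Hmap h0 x0))]

end IsBalanced
end Increments

section Regularity

variable {K N L s : ℕ} {b : Fin L → Fin K → ℂ} {a : Fin s → Fin L → Fin N → ℂ}

lemma sigmaMaxSq_nonneg (h : Fin s → Fin K → ℂ) (x : Fin s → Fin N → ℂ) :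
    0 ≤ sigmaMaxSq b h x :=
  Real.iSup_nonneg fun _ => sum_nonneg fun _ _ => mul_nonneg (sq_nonneg _) (vnormSq_nonneg _)

lemma RankOneBound.vnormSq_calA_Hmap_le (hrank : RankOneBound b a) (h : Fin s → Fin K → ℂ)
    (x : Fin s → Fin N → ℂ) :
    vnormSq (calA b a (Hmap h x))
      ≤ 7 / 3 * famFrobSq (Hmap h x) + 10 * (s * (K + N) * Real.log L * sigmaMaxSq b h x) := by
  have hF := famFrobSq_nonneg (Hmap h x)
  have hq : 0 ≤ s * (K + N) * Real.log L * sigmaMaxSq b h x :=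
    mul_nonneg (mul_nonneg (by positivity) (Real.log_natCast_nonneg L)) (sigmaMaxSq_nonneg h x)
  have hbound := hrank h x
  have hamgm : 2 * Real.sqrt (2 * (s : ℝ) * famFrobSq (Hmap h x) * sigmaMaxSq b h x
      * ((K : ℝ) + N) * Real.log L)
        ≤ famFrobSq (Hmap h x) + 2 * (s * (K + N) * Real.log L * sigmaMaxSq b h x) := by
    rw [← le_div_iff₀' two_pos]
    refine Real.sqrt_le_iff.2 ⟨by linarith, ?_⟩
    linarith [sq_nonneg (famFrobSq (Hmap h x)
      - 2 * (s * (K + N) * Real.log L * sigmaMaxSq b h x))]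
  linarith

lemma log_natCast_le_two_mul_log_sq (n : ℕ) : Real.log n ≤ 2 * Real.log n ^ 2 := by
  rcases Nat.lt_or_ge n 2 with hn | hn
  · interval_cases n <;> simp
  · have hlog : 1 / 2 ≤ Real.log n := calc
      (1 / 2 : ℝ) ≤ Real.log 2 := by linarith [Real.log_two_gt_d9]
      _ ≤ Real.log n := Real.log_le_log (by norm_num) (Nat.ofNat_le_cast.2 hn)
    nlinarith

lemma re_vinner_add_self_ge (p w : Fin L → ℂ) :
    3 / 4 * vnormSq p - vnormSq w ≤ (vinner (p + w) p).re := by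
  have hcs := (Complex.abs_re_le_norm _).trans (norm_vinner_le w p)
  rw [vinner_add_left, vinner_self, Complex.add_re, Complex.ofReal_re, ← vnorm_sq p, ← vnorm_sq w]
  linarith [neg_le_of_abs_le hcs, sq_nonneg (vnorm w - vnorm p / 2)]

namespace IsBalanced

variable {h0 h : Fin s → Fin K → ℂ} {x0 x : Fin s → Fin N → ℂ} {d0 : Fin s → ℝ}

lemma vnormSq_calA_Hmap_dh_dx_le {μ : ℝ} (H : IsBalanced h0 x0 d0) (hL : 0 < L) (hs : 0 < s)
    (hrank : RankOneBound b a) (hμh : muhLe b h0 μ)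
    (hLlarge : 20000 * (μ ^ 2 * s * (K + N) * Real.log L) ≤ L)
    (hNd : inNd d0 h x) (hNμ : inNmu b d0 μ h) (hNε : inNeps h0 x0 d0 (1 / 15) h x) :
    vnormSq (calA b a (Hmap (dh h0 x0 d0 h x) (dx h0 x0 d0 h x)))
      ≤ 3 / 8 * famFrobSq (Hmap h x - Hmap h0 x0) := by
  have hF := famFrobSq_nonneg (Hmap h x - Hmap h0 x0)
  have hcoh : s * (K + N) * Real.log L
      * sigmaMaxSq b (dh h0 x0 d0 h x) (dx h0 x0 d0 h x)
        ≤ famFrobSq (Hmap h x - Hmap h0 x0) / 50 := by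
    have hM : 0 ≤ s * (K + N) * Real.log L :=
      mul_nonneg (by positivity) (Real.log_natCast_nonneg L)
    refine le_of_mul_le_mul_left ?_ (Nat.cast_pos.2 hL : (0 : ℝ) < L)
    calc _ = s * (K + N) * Real.log L
            * (L * sigmaMaxSq b (dh h0 x0 d0 h x) (dx h0 x0 d0 h x)) := by ring
      _ ≤ s * (K + N) * Real.log L * (400 * μ ^ 2 * famFrobSq (Hmap h x - Hmap h0 x0)) :=
          mul_le_mul_of_nonneg_left (H.mul_sigmaMaxSq_dh_dx_le hL hs hμh hNd hNμ hNε) hM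
      _ = 20000 * (μ ^ 2 * s * (K + N) * Real.log L)
            * (famFrobSq (Hmap h x - Hmap h0 x0) / 50) := by ring
      _ ≤ L * (famFrobSq (Hmap h x - Hmap h0 x0) / 50) :=
          mul_le_mul_of_nonneg_right hLlarge (by positivity)
  linarith [hrank.vnormSq_calA_Hmap_le (dh h0 x0 d0 h x) (dx h0 x0 d0 h x),
    H.famFrobSq_Hmap_dh_dx_le hs hNd hNε]

lemma norm_finner_error_add_le (H : IsBalanced h0 x0 d0) (hNd : inNd d0 h x)
    (hNε : inNeps h0 x0 d0 (1 / 15) h x) (e : Fin L → ℂ) (i : Fin s) :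
    ‖finner ((Hmap h x - Hmap h0 x0 + Hmap (dh h0 x0 d0 h x) (dx h0 x0 d0 h x)) i)
        (calAdj b (a i) e)‖ ≤ AadjNorm b a e * (1.7 * incrementScale h0 x0 d0 h x i) := by
  have hop := opNorm_calAdj_le b a e i
  have hA := AadjNorm_nonneg b a e
  have hsqrt : Real.sqrt 2 ≤ 1.5 := Real.sqrt_le_iff.2 (by norm_num)
  rw [Pi.add_apply, finner_add_left]
  refine (norm_add_le _ _).trans ?_
  calc _ ≤ opNorm (calAdj b (a i) e)
            * (Real.sqrt 2 * frob (rankOne (h i) (x i) - rankOne (h0 i) (x0 i)))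
          + opNorm (calAdj b (a i) e) * (vnorm (dh h0 x0 d0 h x i) * vnorm (dx h0 x0 d0 h x i)) :=
        add_le_add (norm_finner_rankOne_sub_rankOne_le _ _ _ _ _) (norm_finner_rankOne_le _ _ _)
    _ ≤ AadjNorm b a e * (1.5 * incrementScale h0 x0 d0 h x i)
          + AadjNorm b a e * (incrementScale h0 x0 d0 h x i / 5) :=
        add_le_add
          (mul_le_mul hop (mul_le_mul hsqrt (H.frob_le_incrementScale i) (frob_nonneg _)
            (by norm_num)) (mul_nonneg (Real.sqrt_nonneg _) (frob_nonneg _)) hA)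
          (mul_le_mul hop (H.vnorm_dh_mul_vnorm_dx_le hNd hNε i)
            (mul_nonneg (vnorm_nonneg _) (vnorm_nonneg _)) hA)
    _ = AadjNorm b a e * (1.7 * incrementScale h0 x0 d0 h x i) := by ring

lemma norm_vinner_calA_error_add_le (H : IsBalanced h0 x0 d0) (hs : 0 < s) (hNd : inNd d0 h x)
    (hNε : inNeps h0 x0 d0 (1 / 15) h x) (e : Fin L → ℂ) :
    ‖vinner (calA b a (Hmap h x - Hmap h0 x0 + Hmap (dh h0 x0 d0 h x) (dx h0 x0 d0 h x))) e‖
      ≤ 2 * (Real.sqrt s * famFrob (Hmap h x - Hmap h0 x0)) * AadjNorm b a e := by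
  have herr : 0 ≤ Real.sqrt s * famFrob (Hmap h x - Hmap h0 x0) :=
    mul_nonneg (Real.sqrt_nonneg _) (Real.sqrt_nonneg _)
  rw [vinner_calA]
  calc _ ≤ ∑ i, AadjNorm b a e * (1.7 * incrementScale h0 x0 d0 h x i) :=
        norm_sum_le_of_le _ fun i _ => H.norm_finner_error_add_le hNd hNε e i
    _ = 1.7 * (∑ i, incrementScale h0 x0 d0 h x i) * AadjNorm b a e := by
        rw [← mul_sum, ← mul_sum, mul_comm]
    _ ≤ 2 * (Real.sqrt s * famFrob (Hmap h x - Hmap h0 x0)) * AadjNorm b a e :=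
        mul_le_mul_of_nonneg_right
          (by linarith [H.sum_incrementScale_le (h := h) (x := x) hs]) (AadjNorm_nonneg b a e)

end IsBalanced

theorem statement12_general {h0 h : Fin s → Fin K → ℂ} {x0 x : Fin s → Fin N → ℂ}
    {d0 : Fin s → ℝ} {μ : ℝ} (hL : 0 < L) (hs : 0 < s) (H : IsBalanced h0 x0 d0)
    (hμh : muhLe b h0 μ) (hLlarge : 20000 * (μ ^ 2 * s * (K + N) * Real.log L) ≤ L)
    (hrank : RankOneBound b a)
    (hNd : inNd d0 h x) (hNμ : inNmu b d0 μ h) (hNε : inNeps h0 x0 d0 (1 / 15) h x)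
    (hRIP : 2 / 3 * famFrobSq (Hmap h x - Hmap h0 x0)
      ≤ vnormSq (calA b a (Hmap h x - Hmap h0 x0)))
    (e : Fin L → ℂ) :
    deltaTot h0 x0 d0 h x ^ 2 * dtot d0 ^ 2 / 8
        - 2 * Real.sqrt s * deltaTot h0 x0 d0 h x * dtot d0 * AadjNorm b a e
      ≤ (∑ i, vinner (gradFh b a h0 x0 e h x i) (dh h0 x0 d0 h x i)
          + ∑ i, vinner (gradFx b a h0 x0 e h x i) (dx h0 x0 d0 h x i)).re := by
  have hnoise := (Complex.re_le_norm _).trans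
    (H.norm_vinner_calA_error_add_le (b := b) (a := a) hs hNd hNε e)
  have hsignal := re_vinner_add_self_ge (calA b a (Hmap h x - Hmap h0 x0))
    (calA b a (Hmap (dh h0 x0 d0 h x) (dx h0 x0 d0 h x)))
  have hsecond := H.vnormSq_calA_Hmap_dh_dx_le hL hs hrank hμh hLlarge hNd hNμ hNε
  rw [re_gradF_pairing, HmapDeriv_dh_dx fun i => H.alphaC_ne_zero hNd hNε i, residual_eq,
    vinner_sub_right, Complex.sub_re]
  rw [← calA_add] at hsignal
  rw [← mul_pow, mul_assoc (2 * Real.sqrt s), H.deltaTot_mul_dtot hs, famFrob_sq]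
  linarith

end Regularity

/-- local regularity for `F`. -/
theorem statement12 :
    ∃ C : ℝ, 0 < C ∧
      ∀ (K N L s : ℕ), 0 < K → 0 < N → 0 < L → 0 < s →
      ∀ b : Fin L → Fin K → ℂ, BtBeqI b → (∀ l, vnormSq (b l) = (K : ℝ) / L) →
      ∀ (a : Fin s → Fin L → Fin N → ℂ)
        (h0 : Fin s → Fin K → ℂ) (x0 : Fin s → Fin N → ℂ) (d0 : Fin s → ℝ),
        (∀ i, 0 < d0 i) → (∀ i, vnorm (h0 i) = Real.sqrt (d0 i)) →
        (∀ i, vnorm (x0 i) = Real.sqrt (d0 i)) →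
      ∀ e : Fin L → ℂ,
      ∀ μ ε : ℝ, 0 < μ → muhLe b h0 μ → 0 < ε → ε ≤ 1 / 15 →
        C * μ ^ 2 * (s : ℝ) * ((K : ℝ) + (N : ℝ)) * Real.log L ^ 2 ≤ (L : ℝ) →
      LocalRIP b a h0 x0 d0 μ ε →
      RankOneBound b a →
      ∀ P : Fin s → Matrix (Fin K) (Fin N) ℂ → Matrix (Fin K) (Fin N) ℂ,
        (∀ i, IsFrobProj (h0 i) (x0 i) (P i)) →
        (∀ Z : Fin s → Matrix (Fin K) (Fin N) ℂ,
          |vnormSq (calA b a fun i => P i (Z i)) - famFrobSq (fun i => P i (Z i))|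
            ≤ 1 / 10 * famFrobSq Z) →
      ∀ (h : Fin s → Fin K → ℂ) (x : Fin s → Fin N → ℂ),
        inNd d0 h x → inNmu b d0 μ h → inNeps h0 x0 d0 ε h x →
          (∑ i, vinner (gradFh b a h0 x0 e h x i) (dh h0 x0 d0 h x i)
            + ∑ i, vinner (gradFx b a h0 x0 e h x i) (dx h0 x0 d0 h x i)).re
          ≥ deltaTot h0 x0 d0 h x ^ 2 * dtot d0 ^ 2 / 8
            - 2 * Real.sqrt s * deltaTot h0 x0 d0 h x * dtot d0 * AadjNorm b a e := by
  refine ⟨40000, by norm_num, ?_⟩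
  intro K N L s _ _ hL hs b _ _ a h0 x0 d0 hd hh0 hx0 e μ ε _ hμh _ hε hLlarge hRIP hrank
    _ _ _ h x hNd hNμ hNε
  have hlog := mul_le_mul_of_nonneg_left (log_natCast_le_two_mul_log_sq L)
    (by positivity : 0 ≤ μ ^ 2 * s * ((K : ℝ) + N))
  exact statement12_general hL hs ⟨hd, hh0, hx0⟩ hμh (by linarith) hrank hNd hNμ
    (fun i => (hNε i).trans hε) (hRIP h x hNd hNμ hNε).1 e

end RGD
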